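/- arXiv:1910.07606 — 3 statements merged into one kernel-verified Lean document; each statement's English description precedes it below -/
import Mathlib

section
/- Let {φ_n} be a semi-regular sequence in a Hilbert space H, with associated positive symmetric operator S (Sφ_n = ψ_n, the biorthogonal sequence). If the Friedrichs extension A_F of S is positive, then {φ_n} is a generalized Riesz system: writing A_F = e^{-Q} with Q = -ln A_F self-adjoint, the vectors e_n := e^{-Q/2}φ_n form an orthonormal basis of H, e_n ∈ D(e^{Q/2}) ∩ D(e^{-Q/2}), and φ_n = e^{Q/2}e_n. -/
open scoped ComplexInnerProductSpace
open Filter Topology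

noncomputable section

variable {H : Type*} [NormedAddCommGroup H] [InnerProductSpace ℂ H] [CompleteSpace H]

/-- `A` is a nonnegative (possibly unbounded) operator. -/
def LinearPMap.IsNonneg (A : H →ₗ.[ℂ] H) : Prop :=
  ∀ f : A.domain, 0 ≤ (⟪A f, (f : H)⟫).re

/-- `A` is a positive operator. -/
def LinearPMap.IsPositive (A : H →ₗ.[ℂ] H) : Prop :=
  ∀ f : A.domain, (f : H) ≠ 0 → 0 < (⟪A f, (f : H)⟫).re

/-- `R` is a square root of `A`. -/
def IsSqrtOf (R A : H →ₗ.[ℂ] H) : Prop :=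
  (∀ x : H, x ∈ A.domain ↔ ∃ hx : x ∈ R.domain, R ⟨x, hx⟩ ∈ R.domain) ∧
  ∀ (x : A.domain) (hx : (x : H) ∈ R.domain) (hx2 : R ⟨(x : H), hx⟩ ∈ R.domain),
    A x = R ⟨R ⟨(x : H), hx⟩, hx2⟩

/-- The form order `A ≥ B` expressed via square roots. -/
def FormGE (sA sB : H →ₗ.[ℂ] H) : Prop :=
  sA.domain ≤ sB.domain ∧
  ∀ (f : sA.domain) (hf : (f : H) ∈ sB.domain), ‖sB ⟨(f : H), hf⟩‖ ≤ ‖sA f‖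

/-- `{e_n}` is an orthonormal basis of `H`. -/
def IsONB (e : ℕ → H) : Prop :=
  Orthonormal ℂ e ∧ Dense ((Submodule.span ℂ (Set.range e) : Submodule ℂ H) : Set H)

/-- `(A_F, sAF)` is the Friedrichs extension of `S` (with its square root): it is a nonnegative
self-adjoint extension of `S` which is greatest in the form order among all nonnegative
self-adjoint extensions of `S`. -/
def IsFriedrichsExtOf (AF sAF S : H →ₗ.[ℂ] H) : Prop :=
  IsSelfAdjoint AF ∧ AF.IsNonneg ∧ S ≤ AF ∧
  IsSelfAdjoint sAF ∧ sAF.IsNonneg ∧ IsSqrtOf sAF AF ∧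
  ∀ B sB : H →ₗ.[ℂ] H, IsSelfAdjoint B → B.IsNonneg → S ≤ B →
    IsSelfAdjoint sB → sB.IsNonneg → IsSqrtOf sB B → FormGE sAF sB

/-- `{φ_n}` is a generalized Riesz system: `φ_n = e^{Q/2} e_n` for a self-adjoint operator `Q`
and an orthonormal basis `{e_n}` with `e_n ∈ D(e^{Q/2}) ∩ D(e^{-Q/2})`.  Here `E = e^{Q/2}` and
`F = e^{-Q/2}` are encoded as a pair of mutually inverse positive self-adjoint operators
(`Q = 2 ln E` is then self-adjoint). -/
def IsGRS (φ : ℕ → H) : Prop :=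
  ∃ (E F : H →ₗ.[ℂ] H) (e : ℕ → H),
    IsSelfAdjoint E ∧ IsSelfAdjoint F ∧ E.IsPositive ∧ F.IsPositive ∧
    (∀ x : E.domain, ∃ h : E x ∈ F.domain, F ⟨E x, h⟩ = (x : H)) ∧
    (∀ y : F.domain, ∃ h : F y ∈ E.domain, E ⟨F y, h⟩ = (y : H)) ∧
    IsONB e ∧
    ∀ n, ∃ (h1 : e n ∈ E.domain) (_ : e n ∈ F.domain), φ n = E ⟨e n, h1⟩

theorem grs_sa_of {A : H →ₗ.[ℂ] H} (hd : Dense (A.domain : Set H))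
    (hs : ∀ x y : A.domain, ⟪A x, (y : H)⟫ = ⟪(x : H), A y⟫)
    (hm : ∀ y z : H, (∀ x : A.domain, ⟪z, (x : H)⟫ = ⟪y, A x⟫) →
      ∃ h : y ∈ A.domain, A ⟨y, h⟩ = z) : IsSelfAdjoint A := by
  rw [LinearPMap.isSelfAdjoint_def]
  symm
  apply LinearPMap.eq_of_le_of_domain_eq
  · exact LinearPMap.IsFormalAdjoint.le_adjoint hd hs
  · apply le_antisymm
    · exact (LinearPMap.IsFormalAdjoint.le_adjoint hd hs).1
    · intro y hy
      have := LinearPMap.adjoint_isFormalAdjoint hd ⟨y, hy⟩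
      exact (hm y _ this).1

theorem grs_sa_symm {A : H →ₗ.[ℂ] H} (hA : IsSelfAdjoint A) (x y : A.domain) :
    ⟪A x, (y : H)⟫ = ⟪(x : H), A y⟫ := by
  have := LinearPMap.adjoint_isFormalAdjoint hA.dense_domain
  rw [LinearPMap.isSelfAdjoint_def.mp hA] at this
  exact this x y

theorem grs_sa_max {A : H →ₗ.[ℂ] H} (hA : IsSelfAdjoint A) (y z : H)
    (h : ∀ x : A.domain, ⟪z, (x : H)⟫ = ⟪y, A x⟫) : ∃ h : y ∈ A.domain, A ⟨y, h⟩ = z := by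
  have h1 := LinearPMap.mem_adjoint_domain_of_exists (T := A) y ⟨z, h⟩
  have h2 := LinearPMap.adjoint_apply_eq hA.dense_domain ⟨y, h1⟩ h
  have hle : A.adjoint ≤ A := (LinearPMap.isSelfAdjoint_def.mp hA).le
  exact ⟨hle.1 h1, by rw [← h2]; exact (hle.2 rfl).symm⟩

/-- the quotient `C P⁻¹` -/
def grsDiv (P C : H →L[ℂ] H) (hP : Function.Injective P) : H →ₗ.[ℂ] H where
  domain := LinearMap.range (P : H →ₗ[ℂ] H)
  toFun := (C : H →ₗ[ℂ] H) ∘ₗ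
    ((LinearEquiv.ofInjective (P : H →ₗ[ℂ] H) hP).symm : _ →ₗ[ℂ] H)

theorem grsDiv_mem (P C : H →L[ℂ] H) (hP : Function.Injective P) (y : H) :
    y ∈ (grsDiv P C hP).domain ↔ ∃ x, P x = y := Iff.rfl

theorem grsDiv_apply (P C : H →L[ℂ] H) (hP : Function.Injective P) {x y : H} (hxy : P x = y)
    (h : y ∈ (grsDiv P C hP).domain) : grsDiv P C hP ⟨y, h⟩ = C x := by
  have : (LinearEquiv.ofInjective (P : H →ₗ[ℂ] H) hP).symm ⟨y, h⟩ = x := by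
    rw [LinearEquiv.symm_apply_eq]; exact Subtype.ext hxy.symm
  change C ((LinearEquiv.ofInjective (P : H →ₗ[ℂ] H) hP).symm ⟨y, h⟩) = C x
  rw [this]

theorem grs_dense_range (P : H →L[ℂ] H) (hP : Function.Injective P) (hPs : 0 ≤ P) :
    Dense (LinearMap.range (P : H →ₗ[ℂ] H) : Set H) := by
  rw [ContinuousLinearMap.nonneg_iff_isPositive] at hPs
  rw [Submodule.dense_iff_topologicalClosure_eq_top, Submodule.topologicalClosure_eq_top_iff,
    Submodule.eq_bot_iff]
  intro z hz
  rw [Submodule.mem_orthogonal] at hz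
  apply hP
  rw [map_zero]
  have := hz (P (P z)) ⟨P z, rfl⟩
  rw [hPs.inner_left_eq_inner_right] at this
  exact inner_self_eq_zero.mp this

theorem grsDiv_sa (P C U V : H →L[ℂ] H) (hP : Function.Injective P) (hPs : 0 ≤ P) (hCs : 0 ≤ C)
    (hc : ∀ x, P (C x) = C (P x)) (hUP : ∀ x, U (P x) = P (U x)) (hVC : ∀ x, V (C x) = C (V x))
    (hUC : ∀ x, U (C x) = C (U x)) (hVP : ∀ x, V (P x) = P (V x))
    (h1 : ∀ x, U (P x) + V (C x) = x) : IsSelfAdjoint (grsDiv P C hP) := by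
  have hd := grs_dense_range P hP hPs
  rw [ContinuousLinearMap.nonneg_iff_isPositive] at hPs hCs
  apply grs_sa_of
  · exact hd
  · rintro ⟨x', hx⟩ ⟨y', hy⟩
    obtain ⟨x, rfl⟩ := (grsDiv_mem P C hP x').1 hx
    obtain ⟨y, rfl⟩ := (grsDiv_mem P C hP y').1 hy
    rw [grsDiv_apply P C hP rfl, grsDiv_apply P C hP rfl]
    simp only
    rw [hCs.inner_left_eq_inner_right,
      hPs.inner_left_eq_inner_right, hc]
  · intro y z h
    have key : C y = P z := by
      refine ext_inner_right ℂ fun x => ?_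
      have := h ⟨P x, (grsDiv_mem P C hP _).2 ⟨x, rfl⟩⟩
      rw [grsDiv_apply P C hP rfl] at this
      rw [hCs.inner_left_eq_inner_right, hPs.inner_left_eq_inner_right]
      exact this.symm
    have e1 : y = P (U y + V z) := by
      conv_lhs => rw [← h1 y]
      rw [map_add, hUP, key, hVP]
    refine ⟨(grsDiv_mem P C hP _).2 ⟨U y + V z, e1.symm⟩, ?_⟩
    rw [grsDiv_apply P C hP e1.symm, map_add, ← hUC, key, ← hVC, h1]

theorem grsDiv_nonneg (P C : H →L[ℂ] H) (hP : Function.Injective P) (hPs : 0 ≤ P) (hCs : 0 ≤ C)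
    (hc : Commute P C) : (grsDiv P C hP).IsNonneg := by
  rintro ⟨x', hx⟩
  obtain ⟨x, rfl⟩ := (grsDiv_mem P C hP x').1 hx
  rw [grsDiv_apply P C hP rfl]
  simp only
  have := hc.mul_nonneg hPs hCs
  rw [ContinuousLinearMap.nonneg_iff_isPositive] at this hPs
  rw [← hPs.inner_left_eq_inner_right]
  exact this.re_inner_nonneg_left x

/-- square roots of a bounded operator `0 ≤ G ≤ 1` -/
theorem grs_exists_sqrt (G : H →L[ℂ] H) (h0 : 0 ≤ G) (h1 : G ≤ 1) :
    ∃ P C : H →L[ℂ] H, 0 ≤ P ∧ 0 ≤ C ∧ Commute P C ∧ P * P = G ∧ C * C = 1 - G := by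
  have h2 : 0 ≤ 1 - G := sub_nonneg.mpr h1
  refine ⟨CFC.sqrt G, CFC.sqrt (1 - G), CFC.sqrt_nonneg _, CFC.sqrt_nonneg _, ?_,
    CFC.sqrt_mul_sqrt_self _ h0, CFC.sqrt_mul_sqrt_self _ h2⟩
  have hc : Commute G (1 - G) := (Commute.one_right G).sub_right (Commute.refl G)
  exact ((hc.cfcₙ_nnreal _).symm.cfcₙ_nnreal _).symm

theorem grs_main_aux (G : H →L[ℂ] H) (h0 : 0 ≤ G) (h1 : G ≤ 1) (hG : Function.Injective G) :
    ∃ P C : H →L[ℂ] H, ∃ hP : Function.Injective P, 0 ≤ P ∧ 0 ≤ C ∧ Commute P C ∧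
      (∀ x, P (P x) = G x) ∧ (∀ x, C (C x) = x - G x) ∧
      IsSelfAdjoint (grsDiv P C hP) ∧ (grsDiv P C hP).IsNonneg ∧
      IsSelfAdjoint (grsDiv G (1 - G) hG) ∧ (grsDiv G (1 - G) hG).IsNonneg ∧
      IsSqrtOf (grsDiv P C hP) (grsDiv G (1 - G) hG) := by
  obtain ⟨P, C, hPs, hCs, hc, hPP, hCC⟩ := grs_exists_sqrt G h0 h1
  have h2 : 0 ≤ 1 - G := sub_nonneg.mpr h1
  have hPPx : ∀ x, P (P x) = G x := fun x => by rw [← hPP]; rfl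
  have hCCx : ∀ x, C (C x) = x - G x := fun x => by
    have := congrArg (fun T : H →L[ℂ] H => T x) hCC
    simpa using this
  have hcx : ∀ x, P (C x) = C (P x) := fun x => congrArg (fun T : H →L[ℂ] H => T x) hc
  have hP : Function.Injective P := by
    intro x y hxy
    apply hG
    rw [← hPPx, ← hPPx, hxy]
  refine ⟨P, C, hP, hPs, hCs, hc, hPPx, hCCx, ?_, ?_, ?_, ?_, ?_, ?_⟩
  · exact grsDiv_sa P C P C hP hPs hCs hcx (fun _ => rfl) (fun _ => rfl) hcx
      (fun x => (hcx x).symm) (fun x => by rw [hPPx, hCCx]; abel)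
  · exact grsDiv_nonneg P C hP hPs hCs hc
  · exact grsDiv_sa G (1 - G) 1 1 hG h0 h2 (fun x => by simp) (fun _ => rfl) (fun _ => rfl)
      (fun _ => rfl) (fun _ => rfl) (fun x => by simp)
  · exact grsDiv_nonneg _ _ hG h0 h2 ((Commute.one_right G).sub_right (Commute.refl G))
  · intro y
    constructor
    · intro hy
      obtain ⟨x, rfl⟩ := (grsDiv_mem _ _ hG y).1 hy
      refine ⟨(grsDiv_mem P C hP _).2 ⟨P x, hPPx x⟩, ?_⟩
      rw [grsDiv_apply P C hP (hPPx x), ← hcx]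
      exact (grsDiv_mem P C hP _).2 ⟨C x, rfl⟩
    · rintro ⟨hx, hx2⟩
      obtain ⟨x, rfl⟩ := (grsDiv_mem P C hP y).1 hx
      rw [grsDiv_apply P C hP rfl] at hx2
      obtain ⟨w, hw⟩ := (grsDiv_mem P C hP _).1 hx2
      refine (grsDiv_mem _ _ hG _).2 ⟨P x + C w, ?_⟩
      rw [← hPPx, map_add, hPPx, hcx w, hw, hCCx]
      congr 1; abel
  · rintro ⟨y, hy⟩ hx hx2
    obtain ⟨x, rfl⟩ := (grsDiv_mem _ _ hG y).1 hy
    rw [grsDiv_apply G (1 - G) hG rfl]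
    have e3 : grsDiv P C hP ⟨G x, hx⟩ = C (P x) := grsDiv_apply P C hP (hPPx x) _
    have e4 : P (C x) = grsDiv P C hP ⟨G x, hx⟩ := by rw [e3, hcx]
    rw [grsDiv_apply P C hP e4, hCCx]
    simp

theorem grs_exists_G (K : Submodule ℂ (WithLp 2 (H × H))) [K.HasOrthogonalProjection] :
    ∃ G T : H →L[ℂ] H, 0 ≤ G ∧ G ≤ 1 ∧ (∀ x, WithLp.toLp 2 (G x, T x) ∈ K) ∧
      ∀ x u v, WithLp.toLp 2 (u, v) ∈ K → ⟪x - G x, u⟫ = ⟪T x, v⟫ := by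
  let e := WithLp.prodContinuousLinearEquiv 2 ℂ H H
  let R : H →L[ℂ] H × H :=
    (e : WithLp 2 (H × H) →L[ℂ] H × H) ∘L K.starProjection ∘L
      (e.symm : H × H →L[ℂ] WithLp 2 (H × H)) ∘L ContinuousLinearMap.inl ℂ H H
  let G : H →L[ℂ] H := ContinuousLinearMap.fst ℂ H H ∘L R
  let T : H →L[ℂ] H := ContinuousLinearMap.snd ℂ H H ∘L R
  have hR : ∀ x, WithLp.toLp 2 (G x, T x) = K.starProjection (WithLp.toLp 2 (x, 0)) :=
    fun x => rfl
  have hmem : ∀ x, WithLp.toLp 2 (G x, T x) ∈ K := fun x => by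
    rw [hR]; exact K.starProjection_apply_mem _
  have hkey : ∀ x u v, WithLp.toLp 2 (u, v) ∈ K → ⟪x - G x, u⟫ = ⟪T x, v⟫ := by
    intro x u v huv
    have := K.starProjection_inner_eq_zero (WithLp.toLp 2 (x, 0)) _ huv
    rw [← hR] at this
    simp only [WithLp.prod_inner_apply, WithLp.ofLp_sub, Prod.fst_sub, Prod.snd_sub, zero_sub,
      inner_neg_left] at this
    linear_combination this
  have hG : ∀ x y, ⟪x, G y⟫ = ⟪G x, G y⟫ + ⟪T x, T y⟫ := by
    intro x y
    have := hkey x _ _ (hmem y)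
    rw [inner_sub_left] at this
    linear_combination this
  have hG' : ∀ x y, ⟪G x, y⟫ = ⟪G x, G y⟫ + ⟪T x, T y⟫ := by
    intro x y
    rw [← inner_conj_symm, hG, map_add, inner_conj_symm, inner_conj_symm]
  refine ⟨G, T, ?_, ?_, hmem, hkey⟩
  · rw [ContinuousLinearMap.nonneg_iff_isPositive, ContinuousLinearMap.isPositive_def]
    refine ⟨fun x y => ?_, fun x => ?_⟩
    · exact (hG' x y).trans (hG x y).symm
    · rw [ContinuousLinearMap.reApplyInnerSelf_apply, hG', map_add]
      exact add_nonneg inner_self_nonneg inner_self_nonneg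
  · rw [ContinuousLinearMap.le_def, ContinuousLinearMap.isPositive_def]
    refine ⟨fun x y => ?_, fun x => ?_⟩
    · change ⟪x - G x, y⟫ = ⟪x, y - G y⟫
      rw [inner_sub_left, inner_sub_right, hG, hG']
    · rw [ContinuousLinearMap.reApplyInnerSelf_apply]
      change 0 ≤ RCLike.re ⟪x - G x, x⟫
      have : ⟪x - G x, x⟫ = ⟪x - G x, x - G x⟫ + ⟪T x, T x⟫ := by
        rw [← hkey x _ _ (hmem x), ← inner_add_right, sub_add_cancel]
      rw [this, map_add]
      exact add_nonneg inner_self_nonneg inner_self_nonneg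

theorem grs_range (K : Submodule ℂ (WithLp 2 (H × H))) (hK : IsClosed (K : Set (WithLp 2 (H × H))))
    (G T P C : H →L[ℂ] H) (hmem : ∀ x, WithLp.toLp 2 (G x, T x) ∈ K)
    (hkey : ∀ x, ⟪x - G x, G x⟫ = ⟪T x, T x⟫) (hP : Function.Injective P)
    (hPs : 0 ≤ P) (hCs : 0 ≤ C) (hc : Commute P C)
    (hPP : ∀ x, P (P x) = G x) (hCC : ∀ x, C (C x) = x - G x) (x : H) :
    ∃ y, WithLp.toLp 2 (P x, y) ∈ K := by
  have hd := grs_dense_range P hP hPs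
  rw [ContinuousLinearMap.nonneg_iff_isPositive] at hPs hCs
  have hcx : ∀ x, P (C x) = C (P x) := fun x => congrArg (fun T : H →L[ℂ] H => T x) hc
  have hn : ∀ w, ‖T w‖ = ‖C (P w)‖ := by
    intro w
    have : ⟪T w, T w⟫ = ⟪C (P w), C (P w)⟫ := by
      rw [← hkey, ← hCC, ← hPP, hCs.inner_left_eq_inner_right, hCs.inner_left_eq_inner_right,
        ← hcx (P w), ← hCs.inner_left_eq_inner_right w (P (C (P w))),
        ← hPs.inner_left_eq_inner_right, hcx w]
    rw [inner_self_eq_norm_sq_to_K, inner_self_eq_norm_sq_to_K] at this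
    have h2 : ‖T w‖ ^ 2 = ‖C (P w)‖ ^ 2 := by exact_mod_cast this
    exact (sq_eq_sq₀ (norm_nonneg _) (norm_nonneg _)).mp h2
  obtain ⟨s, hs, hlim⟩ := mem_closure_iff_seq_limit.mp (hd x)
  choose w hw using hs
  have hw : ∀ n, P (w n) = s n := hw
  have hcau : CauchySeq (fun n => T (w n)) := by
    have h1 : CauchySeq (fun n => C (s n)) := ((C.continuous.tendsto x).comp hlim).cauchySeq
    rw [Metric.cauchySeq_iff] at h1 ⊢
    intro ε hε
    obtain ⟨N, hN⟩ := h1 ε hε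
    refine ⟨N, fun m hm n hn' => ?_⟩
    have := hN m hm n hn'
    rw [dist_eq_norm] at this ⊢
    rw [← map_sub, hn, map_sub P, map_sub C, hw, hw]
    exact this
  obtain ⟨y, hy⟩ := cauchySeq_tendsto_of_complete hcau
  refine ⟨y, ?_⟩
  have hG : Tendsto (fun n => G (w n)) atTop (𝓝 (P x)) := by
    have := (P.continuous.tendsto x).comp hlim
    refine this.congr fun n => ?_
    simp only [Function.comp_apply]
    rw [← hw, hPP]
  have h2 : Tendsto (fun n => WithLp.toLp 2 (G (w n), T (w n))) atTop
      (𝓝 (WithLp.toLp 2 (P x, y))) :=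
    ((WithLp.prod_continuous_toLp 2 H H).tendsto (P x, y)).comp (hG.prodMk_nhds hy)
  exact hK.mem_of_tendsto h2 (Eventually.of_forall fun n => hmem (w n))

/-- `S` is a core of the square root of the Friedrichs extension. -/
theorem grs_core (S AF sAF : H →ₗ.[ℂ] H) (hAF : IsFriedrichsExtOf AF sAF S)
    (hSd : Dense (S.domain : Set H))
    (K : Submodule ℂ (WithLp 2 (H × H))) (hK : IsClosed (K : Set (WithLp 2 (H × H))))
    (hK1 : ∀ (f : S.domain) (h : (f : H) ∈ sAF.domain), WithLp.toLp 2 ((f : H), sAF ⟨f, h⟩) ∈ K)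
    (hK2 : ∀ u v, WithLp.toLp 2 (u, v) ∈ K → ∃ h : u ∈ sAF.domain, sAF ⟨u, h⟩ = v)
    (x : sAF.domain) : WithLp.toLp 2 ((x : H), sAF x) ∈ K := by
  obtain ⟨hA, hAn, hSA, hs, hsn, hsq, hmax⟩ := hAF
  have : CompleteSpace K := hK.completeSpace_coe
  obtain ⟨G, T, hG0, hG1, hmem, hkey⟩ := grs_exists_G K
  have hdom : ∀ f : S.domain, ∃ h : (f : H) ∈ sAF.domain, ∃ h2 : sAF ⟨f, h⟩ ∈ sAF.domain,
      S f = sAF ⟨sAF ⟨f, h⟩, h2⟩ := by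
    intro f
    have hf := hSA.1 f.2
    obtain ⟨h, h2⟩ := (hsq.1 f).1 hf
    refine ⟨h, h2, ?_⟩
    rw [← hsq.2 ⟨f, hf⟩ h h2]
    exact hSA.2 rfl
  have hGinj : Function.Injective G := by
    rw [injective_iff_map_eq_zero]
    intro x hx
    have h1 := hkey x _ _ (hmem x)
    rw [hx, inner_zero_right] at h1
    have hT : T x = 0 := inner_self_eq_zero.mp h1.symm
    refine hSd.eq_zero_of_inner_left ℂ fun f hf => ?_
    obtain ⟨h, -⟩ := hdom ⟨f, hf⟩
    have := hkey x _ _ (hK1 ⟨f, hf⟩ h)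
    rwa [hx, hT, inner_zero_left, sub_zero] at this
  obtain ⟨P, C, hP, hPs, hCs, hc, hPP, hCC, hsa, hnn, hBsa, hBnn, hBsq⟩ :=
    grs_main_aux G hG0 hG1 hGinj
  have hGf : ∀ f : S.domain, G (f + S f) = f := by
    intro f
    obtain ⟨h, h2, hSf⟩ := hdom f
    set g := G (f + S f) with hg
    set t := T (f + S f) with ht
    have hd : WithLp.toLp 2 ((f : H) - g, sAF ⟨f, h⟩ - t) ∈ K :=
      K.sub_mem (hK1 f h) (hmem (f + S f))
    have e1 := hkey (f + S f) _ _ hd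
    obtain ⟨h3, h4⟩ := hK2 _ _ hd
    have e2 : ⟪S f, (f : H) - g⟫ = ⟪sAF ⟨f, h⟩, sAF ⟨f, h⟩ - t⟫ := by
      rw [hSf, ← h4]
      exact grs_sa_symm hs ⟨_, h2⟩ ⟨_, h3⟩
    rw [← hg, ← ht] at e1
    have e3 : ⟪(f : H) - g, (f : H) - g⟫ + ⟪sAF ⟨f, h⟩ - t, sAF ⟨f, h⟩ - t⟫ = 0 := by
      have a1 : ((f : H) + S f - g) = ((f : H) - g) + S f := by abel
      rw [a1, inner_add_left, e2] at e1
      rw [inner_sub_left (sAF ⟨f, h⟩) t]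
      linear_combination e1
    have e4 := congrArg (RCLike.re : ℂ → ℝ) e3
    rw [map_add, inner_self_eq_norm_sq, inner_self_eq_norm_sq, map_zero] at e4
    have e5 : ‖(f : H) - g‖ = 0 := by
      have := sq_nonneg ‖sAF ⟨f, h⟩ - t‖
      have := sq_nonneg ‖(f : H) - g‖
      exact pow_eq_zero_iff (two_ne_zero) |>.mp (by linarith)
    exact (sub_eq_zero.mp (norm_eq_zero.mp e5)).symm
  have hSB : S ≤ grsDiv G (1 - G) hGinj := by
    refine ⟨fun f hf => (grsDiv_mem _ _ hGinj f).2 ⟨_, hGf ⟨f, hf⟩⟩, ?_⟩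
    rintro f ⟨y, hy⟩ hfy
    have e : G (f + S f) = y := (hGf f).trans hfy
    rw [grsDiv_apply _ _ hGinj e]
    change S f = (f + S f) - G (f + S f)
    rw [hGf]; abel
  have hform := hmax _ _ hBsa hBnn hSB hsa hnn hBsq
  obtain ⟨w, hw⟩ := (grsDiv_mem P C hP _).1 (hform.1 x.2)
  obtain ⟨y, hy⟩ := grs_range K hK G T P C hmem (fun x => hkey x _ _ (hmem x)) hP hPs hCs hc
    hPP hCC w
  rw [hw] at hy
  obtain ⟨h, rfl⟩ := hK2 _ _ hy
  exact hy

/-- If the Friedrichs extension `A_F = e^{-Q}` of the operator `S` associated with a semi-regular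
sequence `{φ_n}` is positive, then `{φ_n}` is a generalized Riesz system: the vectors
`e_n := e^{-Q/2} φ_n = sAF φ_n` form an orthonormal basis of `H` and `φ_n = e^{Q/2} e_n`. -/
theorem GRS_of_friedrichs_positive
    (φ ψ : ℕ → H)
    (hbi : ∀ n m, ⟪ψ n, φ m⟫ = if n = m then (1 : ℂ) else 0)
    (hcomp : Dense ((Submodule.span ℂ (Set.range φ) : Submodule ℂ H) : Set H))
    (S : H →ₗ.[ℂ] H)
    (hdom : S.domain = Submodule.span ℂ (Set.range φ))
    (hS : ∀ n, ∃ h : φ n ∈ S.domain, S ⟨φ n, h⟩ = ψ n)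
    (AF sAF : H →ₗ.[ℂ] H) (hAF : IsFriedrichsExtOf AF sAF S)
    (hpos : AF.IsPositive) :
    (∃ e : ℕ → H, IsONB e ∧
        ∀ n, ∃ h : φ n ∈ sAF.domain, e n = sAF ⟨φ n, h⟩) ∧
    IsGRS φ := by
  have hSd : Dense (S.domain : Set H) := by rw [hdom]; exact hcomp
  obtain ⟨hA, hAn, hSA, hs, hsn, hsq, hmax⟩ := id hAF
  have hφ : ∀ n, ∃ h : φ n ∈ sAF.domain, ∃ h2 : sAF ⟨φ n, h⟩ ∈ sAF.domain,
      ψ n = sAF ⟨sAF ⟨φ n, h⟩, h2⟩ := by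
    intro n
    obtain ⟨hn, hSn⟩ := hS n
    have hf := hSA.1 hn
    obtain ⟨h, h2⟩ := (hsq.1 (φ n)).1 hf
    refine ⟨h, h2, ?_⟩
    rw [← hsq.2 ⟨φ n, hf⟩ h h2, ← hSn]
    exact hSA.2 rfl
  choose hφ1 hφ2 hφ3 using hφ
  have hinj : ∀ x : sAF.domain, sAF x = 0 → (x : H) = 0 := by
    intro x hx
    by_contra hne
    have h2 : sAF x ∈ sAF.domain := by rw [hx]; exact zero_mem _
    have hxA : (x : H) ∈ AF.domain := (hsq.1 x).2 ⟨x.2, h2⟩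
    have h3 := hpos ⟨x, hxA⟩ hne
    have h4 : sAF ⟨sAF x, h2⟩ = 0 := by
      have : (⟨sAF x, h2⟩ : sAF.domain) = 0 := Subtype.ext hx
      rw [this]; exact sAF.map_zero
    rw [hsq.2 ⟨x, hxA⟩ x.2 h2] at h3
    change 0 < (⟪sAF ⟨sAF x, h2⟩, (x : H)⟫).re at h3
    rw [h4, inner_zero_left] at h3
    exact lt_irrefl _ h3
  let e : ℕ → H := fun n => sAF ⟨φ n, hφ1 n⟩
  let N : Submodule ℂ (WithLp 2 (H × H)) :=
    Submodule.span ℂ (Set.range fun n => WithLp.toLp 2 (φ n, e n))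
  let K := N.topologicalClosure
  have hK : IsClosed (K : Set (WithLp 2 (H × H))) := N.isClosed_topologicalClosure
  have hind : ∀ (z : WithLp 2 (H × H)), (∀ n, ⟪WithLp.toLp 2 (φ n, e n), z⟫ = 0) →
      ∀ p ∈ K, ⟪p, z⟫ = 0 := by
    intro z hz
    have hN : N ≤ (Submodule.span ℂ {z})ᗮ := by
      refine Submodule.span_le.mpr ?_
      rintro _ ⟨n, rfl⟩
      exact Submodule.mem_orthogonal_singleton_iff_inner_left.mpr (hz n)
    intro p hp
    exact Submodule.mem_orthogonal_singleton_iff_inner_left.mp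
      (N.topologicalClosure_minimal hN (Submodule.isClosed_orthogonal _) hp)
  have hK2 : ∀ u v, WithLp.toLp 2 (u, v) ∈ K → ∃ h : u ∈ sAF.domain, sAF ⟨u, h⟩ = v := by
    intro u v huv
    apply grs_sa_max hs
    intro x
    have := hind (WithLp.toLp 2 (-sAF x, (x : H))) (fun n => by
      have := grs_sa_symm hs ⟨φ n, hφ1 n⟩ x
      simp only [WithLp.prod_inner_apply, inner_neg_right]
      linear_combination this) _ huv
    simp only [WithLp.prod_inner_apply, inner_neg_right] at this
    linear_combination this
  have hK1 : ∀ (f : S.domain) (h : (f : H) ∈ sAF.domain),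
      WithLp.toLp 2 ((f : H), sAF ⟨f, h⟩) ∈ K := by
    have key : ∀ f ∈ Submodule.span ℂ (Set.range φ), ∃ v, WithLp.toLp 2 (f, v) ∈ K := by
      intro f hf
      induction hf using Submodule.span_induction with
      | mem x hx =>
        obtain ⟨n, rfl⟩ := hx
        exact ⟨e n, N.le_topologicalClosure (Submodule.subset_span ⟨n, rfl⟩)⟩
      | zero => exact ⟨0, K.zero_mem⟩
      | add x y _ _ hx hy =>
        obtain ⟨a, ha⟩ := hx
        obtain ⟨b, hb⟩ := hy
        exact ⟨a + b, K.add_mem ha hb⟩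
      | smul c x _ hx =>
        obtain ⟨a, ha⟩ := hx
        exact ⟨c • a, K.smul_mem c ha⟩
    intro f h
    obtain ⟨v, hv⟩ := key f (hdom ▸ f.2)
    obtain ⟨h', rfl⟩ := hK2 _ _ hv
    exact hv
  have hcore := grs_core S AF sAF hAF hSd K hK hK1 hK2
  -- vectors orthogonal to the range of `sAF` vanish
  have hran : ∀ z : H, (∀ x : sAF.domain, ⟪z, sAF x⟫ = 0) → z = 0 := by
    intro z hz
    obtain ⟨h, h0⟩ := grs_sa_max hs z 0 (fun x => by rw [hz, inner_zero_left])
    exact hinj ⟨z, h⟩ h0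
  have hONB : IsONB e := by
    constructor
    · rw [orthonormal_iff_ite]
      intro n m
      rw [← hbi n m, hφ3 n]
      exact (grs_sa_symm hs ⟨_, hφ2 n⟩ ⟨_, hφ1 m⟩).symm
    · rw [Submodule.dense_iff_topologicalClosure_eq_top, Submodule.topologicalClosure_eq_top_iff,
        Submodule.eq_bot_iff]
      intro z hz
      rw [Submodule.mem_orthogonal] at hz
      apply hran
      intro x
      have := hind (WithLp.toLp 2 (0, z)) (fun n => by
        have := hz (e n) (Submodule.subset_span ⟨n, rfl⟩)
        simp only [WithLp.prod_inner_apply, inner_zero_right]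
        linear_combination this) _ (hcore x)
      simp only [WithLp.prod_inner_apply, inner_zero_right, zero_add] at this
      rw [← inner_conj_symm, this, map_zero]
  refine ⟨⟨e, hONB, fun n => ⟨hφ1 n, rfl⟩⟩, ?_⟩
  have hker : LinearMap.ker sAF.toFun = ⊥ := by
    rw [LinearMap.ker_eq_bot']
    intro x hx
    exact Subtype.ext (hinj x hx)
  have hEdom : ∀ y, y ∈ sAF.inverse.domain ↔ ∃ x : sAF.domain, sAF x = y := by
    intro y
    rw [LinearPMap.inverse_domain]
    exact Iff.rfl
  have hE : ∀ (x : sAF.domain) (h : sAF x ∈ sAF.inverse.domain),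
      sAF.inverse ⟨sAF x, h⟩ = x := fun x h =>
    LinearPMap.inverse_apply_eq hker (y := ⟨sAF x, h⟩) rfl
  have hFpos : sAF.IsPositive := by
    intro x hx
    refine lt_of_le_of_ne (hsn x) fun h0 => hx (hinj x ?_)
    have hre : ∀ y : sAF.domain, (⟪sAF x, (y : H)⟫).re = 0 := by
      intro y
      set b := (⟪sAF x, (y : H)⟫).re with hb
      set c := (⟪sAF y, (y : H)⟫).re with hcdef
      have hc : 0 ≤ c := hsn y
      have hq : ∀ t : ℝ, 0 ≤ 2 * t * b + t ^ 2 * c := by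
        intro t
        have h1 := hsn (x + (t : ℂ) • y)
        have h2 : (⟪sAF y, (x : H)⟫).re = b := by
          rw [grs_sa_symm hs y x, ← inner_conj_symm, Complex.conj_re]
        rw [LinearPMap.map_add, LinearPMap.map_smul] at h1
        simp only [Submodule.coe_add, Submodule.coe_smul, inner_add_left, inner_add_right,
          inner_smul_left, inner_smul_right, Complex.conj_ofReal, Complex.add_re,
          Complex.re_ofReal_mul, ← h0, h2, ← hb, ← hcdef] at h1
        nlinarith [h1]
      have h1 := hq (-b / (c + 1))
      have hc1 : 0 < c + 1 := by linarith
      have h3 : 2 * (-b / (c + 1)) * b + (-b / (c + 1)) ^ 2 * c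
          = -(b ^ 2 * (c + 2)) / (c + 1) ^ 2 := by
        field_simp; ring
      rw [h3, neg_div] at h1
      have h4 : b ^ 2 * (c + 2) / (c + 1) ^ 2 ≤ 0 := by linarith
      have h5 : b ^ 2 * (c + 2) ≤ 0 := by
        by_contra hcon
        push Not at hcon
        have := div_pos hcon (pow_pos hc1 2)
        linarith
      have h6 : b ^ 2 ≤ 0 := by nlinarith [sq_nonneg b]
      exact pow_eq_zero_iff two_ne_zero |>.mp (le_antisymm h6 (sq_nonneg b))
    refine hs.dense_domain.eq_zero_of_inner_left ℂ fun y hy => ?_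
    apply Complex.ext
    · exact hre ⟨y, hy⟩
    · have := hre (Complex.I • ⟨y, hy⟩)
      rw [Submodule.coe_smul, inner_smul_right] at this
      simpa using this
  refine ⟨sAF.inverse, sAF, e, ?_, hs, ?_, hFpos, ?_, ?_, hONB, ?_⟩
  · apply grs_sa_of
    · rw [Submodule.dense_iff_topologicalClosure_eq_top, Submodule.topologicalClosure_eq_top_iff,
        Submodule.eq_bot_iff]
      intro z hz
      rw [Submodule.mem_orthogonal'] at hz
      exact hran z fun x => hz _ ((hEdom _).2 ⟨x, rfl⟩)
    · rintro ⟨x', hx⟩ ⟨y', hy⟩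
      obtain ⟨x, rfl⟩ := (hEdom x').1 hx
      obtain ⟨y, rfl⟩ := (hEdom y').1 hy
      rw [hE, hE]
      exact (grs_sa_symm hs x y).symm
    · intro y z h
      obtain ⟨h1, h2⟩ := grs_sa_max hs z y (fun x => by
        have := h ⟨sAF x, (hEdom _).2 ⟨x, rfl⟩⟩
        rw [hE] at this
        exact this.symm)
      subst h2
      exact ⟨(hEdom _).2 ⟨_, rfl⟩, hE _ _⟩
  · rintro ⟨x', hx⟩ hne
    obtain ⟨x, rfl⟩ := (hEdom x').1 hx
    rw [hE]
    change 0 < (⟪(x : H), sAF x⟫).re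
    rw [← grs_sa_symm hs]
    apply hFpos x
    intro hx0
    apply hne
    have : x = 0 := Subtype.ext hx0
    change sAF x = 0
    rw [this, LinearPMap.map_zero]
  · rintro ⟨x', hx⟩
    obtain ⟨x, rfl⟩ := (hEdom x').1 hx
    rw [hE]
    exact ⟨x.2, rfl⟩
  · intro y
    exact ⟨(hEdom _).2 ⟨y, rfl⟩, hE y _⟩
  · intro n
    exact ⟨(hEdom _).2 ⟨_, rfl⟩, hφ2 n, (hE ⟨φ n, hφ1 n⟩ _).symm⟩
end
end

section
/- A semi-regular sequence {φ_n} in a Hilbert space H is a Bessel sequence with bound b (i.e., Σ_n |⟨f, φ_n⟩|² ≤ b‖f‖² for all f ∈ H) if and only if {φ_n} is a generalized Riesz system φ_n = e^{Q/2}e_n where Q is a self-adjoint operator with σ(Q) ⊆ (-∞, ln b] and {e_n} is an orthonormal basis of H. -/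
open scoped ComplexInnerProductSpace

noncomputable section

variable {H : Type*} [NormedAddCommGroup H] [InnerProductSpace ℂ H] [CompleteSpace H]

/-- The (unbounded) inverse of an injective bounded operator. -/
def invPMap (E : H →L[ℂ] H) (hE : Function.Injective E) : H →ₗ.[ℂ] H where
  domain := LinearMap.range (E : H →ₗ[ℂ] H)
  toFun := ((LinearEquiv.ofInjective (E : H →ₗ[ℂ] H) hE).symm :
    LinearMap.range (E : H →ₗ[ℂ] H) →ₗ[ℂ] H)

lemma invPMap_left (E : H →L[ℂ] H) (hE : Function.Injective E) (x : H)
    (h : E x ∈ (invPMap E hE).domain) : invPMap E hE ⟨E x, h⟩ = x := by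
  apply hE
  have := LinearEquiv.apply_symm_apply (LinearEquiv.ofInjective (E : H →ₗ[ℂ] H) hE) ⟨E x, h⟩
  exact congrArg Subtype.val this

lemma invPMap_right (E : H →L[ℂ] H) (hE : Function.Injective E)
    (y : (invPMap E hE).domain) : E (invPMap E hE y) = (y : H) := by
  have := LinearEquiv.apply_symm_apply (LinearEquiv.ofInjective (E : H →ₗ[ℂ] H) hE) y
  exact congrArg Subtype.val this

lemma inner_sa (E : H →L[ℂ] H) (h : IsSelfAdjoint E) (x y : H) : ⟪E x, y⟫ = ⟪x, E y⟫ :=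
  (ContinuousLinearMap.isSelfAdjoint_iff_isSymmetric.mp h) x y

lemma dense_range_sa (E : H →L[ℂ] H) (hE : Function.Injective E) (hsa : IsSelfAdjoint E) :
    Dense ((LinearMap.range (E : H →ₗ[ℂ] H) : Submodule ℂ H) : Set H) := by
  rw [Submodule.dense_iff_topologicalClosure_eq_top, Submodule.topologicalClosure_eq_top_iff,
    Submodule.eq_bot_iff]
  intro x hx
  rw [Submodule.mem_orthogonal] at hx
  apply hE
  rw [map_zero, ← inner_self_eq_zero (𝕜 := ℂ), ← inner_sa E hsa]
  exact hx _ ⟨E x, rfl⟩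

lemma invPMap_sa (E : H →L[ℂ] H) (hE : Function.Injective E) (hsa : IsSelfAdjoint E) :
    IsSelfAdjoint (invPMap E hE) := by
  have hd : Dense ((invPMap E hE).domain : Set H) := dense_range_sa E hE hsa
  have hf : (invPMap E hE).IsFormalAdjoint (invPMap E hE) := by
    intro x y
    rw [← invPMap_right E hE x, ← invPMap_right E hE y]
    have := inner_sa E hsa (invPMap E hE x) (invPMap E hE y)
    simpa only [invPMap_right] using this.symm
  have hle := LinearPMap.IsFormalAdjoint.le_adjoint hd hf
  rw [LinearPMap.isSelfAdjoint_def]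
  symm
  refine LinearPMap.eq_of_le_of_domain_eq hle (le_antisymm hle.1 ?_)
  intro y hy
  refine ⟨(invPMap E hE).adjoint ⟨y, hy⟩, ?_⟩
  refine ext_inner_right ℂ fun x => ?_
  have h := LinearPMap.adjoint_isFormalAdjoint hd ⟨y, hy⟩ ⟨E x, ⟨x, rfl⟩⟩
  have h2 : invPMap E hE ⟨E x, ⟨x, rfl⟩⟩ = x := invPMap_left E hE x _
  exact (inner_sa E hsa _ _).trans (h.trans (congrArg (fun z => ⟪y, z⟫) h2))

/-- The analysis operator of a Bessel sequence. -/
lemma exists_analysis (φ : ℕ → H) (b : ℝ) (hb : 0 < b)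
    (h : ∀ f : H, Summable (fun n => ‖⟪f, φ n⟫‖ ^ 2) ∧ ∑' n, ‖⟪f, φ n⟫‖ ^ 2 ≤ b * ‖f‖ ^ 2) :
    ∃ T : H →L[ℂ] lp (fun _ : ℕ => ℂ) 2, (∀ f n, (T f : ℕ → ℂ) n = ⟪φ n, f⟫) ∧
      ∀ f, ‖T f‖ ^ 2 = ∑' n, ‖⟪f, φ n⟫‖ ^ 2 := by
  have hmem : ∀ f : H, Memℓp (fun n => ⟪φ n, f⟫) (2 : ENNReal) := by
    intro f
    apply memℓp_gen
    refine (h f).1.congr fun n => ?_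
    rw [norm_inner_symm]
    simp
  have hnorm : ∀ f : H, ‖(⟨fun n => ⟪φ n, f⟫, hmem f⟩ : lp (fun _ : ℕ => ℂ) 2)‖ ^ 2
      = ∑' n, ‖⟪f, φ n⟫‖ ^ 2 := by
    intro f
    have := lp.norm_rpow_eq_tsum (p := 2) (by simp)
      (⟨fun n => ⟪φ n, f⟫, hmem f⟩ : lp (fun _ : ℕ => ℂ) 2)
    simp only [ENNReal.toReal_ofNat, Real.rpow_ofNat] at this
    rw [this]
    exact tsum_congr fun n => by rw [norm_inner_symm]
  let L : H →ₗ[ℂ] lp (fun _ : ℕ => ℂ) 2 :=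
    { toFun := fun f => ⟨fun n => ⟪φ n, f⟫, hmem f⟩
      map_add' := fun f g => by
        ext n
        exact inner_add_right _ _ _
      map_smul' := fun c f => by
        ext n
        exact inner_smul_right _ _ _ }
  refine ⟨L.mkContinuous (Real.sqrt b) fun f => ?_, fun f n => rfl, hnorm⟩
  refine le_of_sq_le_sq ?_ (by positivity)
  rw [mul_pow, Real.sq_sqrt hb.le]
  exact (hnorm f).trans_le (h f).2

/-- A semi-regular sequence `{φ_n}` (minimal with biorthogonal `{ψ_n}`, and complete) is a
Bessel sequence with bound `b` if and only if it is a generalized Riesz system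
`φ_n = e^{Q/2} e_n` with `σ(Q) ⊆ (-∞, ln b]`.  Here `E = e^{Q/2}` is encoded as a bounded
positive injective self-adjoint operator with `σ(E) ⊆ [0, √b]` and dense range, and
`F = e^{-Q/2}` as its (possibly unbounded) positive self-adjoint inverse, with
`e_n ∈ D(E) ∩ D(F)`. -/
theorem bessel_iff_GRS_spectrum_bounded
    (φ ψ : ℕ → H) (b : ℝ) (hb : 0 < b)
    (hbi : ∀ n m, ⟪ψ n, φ m⟫ = if n = m then (1 : ℂ) else 0)
    (hcomp : Dense ((Submodule.span ℂ (Set.range φ) : Submodule ℂ H) : Set H)) :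
    (∀ f : H, Summable (fun n => ‖⟪f, φ n⟫‖ ^ 2) ∧ ∑' n, ‖⟪f, φ n⟫‖ ^ 2 ≤ b * ‖f‖ ^ 2)
    ↔
    (∃ (E : H →L[ℂ] H) (F : H →ₗ.[ℂ] H) (e : ℕ → H),
      IsSelfAdjoint E ∧ (∀ f : H, 0 ≤ (⟪E f, f⟫).re) ∧ Function.Injective E ∧
      spectrum ℝ E ⊆ Set.Icc 0 (Real.sqrt b) ∧ Dense (Set.range E) ∧
      IsSelfAdjoint F ∧ (∀ y : F.domain, 0 ≤ (⟪F y, (y : H)⟫).re) ∧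
      (∀ x : H, ∃ h : E x ∈ F.domain, F ⟨E x, h⟩ = x) ∧
      (∀ y : F.domain, E (F y) = (y : H)) ∧
      IsONB e ∧
      ∀ n, e n ∈ F.domain ∧ φ n = E (e n)) := by
  constructor
  · intro h
    obtain ⟨T, hT, hTn⟩ := exists_analysis φ b hb h
    let A : H →L[ℂ] H := (ContinuousLinearMap.adjoint T) ∘L T
    have hA : 0 ≤ A := (ContinuousLinearMap.nonneg_iff_isPositive _).2
      (ContinuousLinearMap.isPositive_adjoint_comp_self T)
    let E : H →L[ℂ] H := CFC.sqrt A
    have hE0 : 0 ≤ E := CFC.sqrt_nonneg A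
    have hEE : E * E = A := CFC.sqrt_mul_sqrt_self A hA
    have hsa : IsSelfAdjoint E := .of_nonneg hE0
    have hEA : ∀ f, E (E f) = A f := fun f => by rw [← hEE]; rfl
    have hin : ∀ f g, ⟪E f, E g⟫ = ⟪T f, T g⟫ := fun f g => by
      rw [← inner_sa E hsa, hEA]
      exact ContinuousLinearMap.adjoint_inner_left T g (T f)
    have hEn : ∀ f, ‖E f‖ ^ 2 = ‖T f‖ ^ 2 := fun f => by
      have := hin f f
      rw [inner_self_eq_norm_sq_to_K, inner_self_eq_norm_sq_to_K] at this
      exact_mod_cast this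
    have hbi' : ∀ n m, ⟪φ m, ψ n⟫ = if n = m then (1 : ℂ) else 0 := fun n m => by
      rw [← inner_conj_symm, hbi]; split_ifs <;> simp
    have hTψ : ∀ n, T (ψ n) = lp.single 2 n (1 : ℂ) := fun n => by
      ext m
      rw [hT, hbi', lp.coeFn_single, Pi.single_apply]
      simp only [eq_comm]
    have hψ : ∀ n g, ⟪T (ψ n), T g⟫ = ⟪φ n, g⟫ := fun n g => by
      rw [hTψ, lp.inner_single_left, hT]; simp
    have hφ : ∀ n, φ n = E (E (ψ n)) := fun n => by
      refine ext_inner_right ℂ fun g => ?_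
      rw [inner_sa E hsa, hin, hψ]
    have hinj : Function.Injective E := by
      refine (injective_iff_map_eq_zero E).2 fun f hf => ?_
      have h0 : T f = 0 := by
        have := hEn f
        rw [hf] at this
        simpa using this.symm
      have h1 : ∀ n, ⟪φ n, f⟫ = 0 := fun n => by rw [← hT, h0]; rfl
      refine hcomp.eq_zero_of_inner_right (𝕜 := ℂ) fun v hv => ?_
      induction hv using Submodule.span_induction with
      | mem x hx => obtain ⟨n, rfl⟩ := hx; exact h1 n
      | zero => simp
      | add x y _ _ hx hy => rw [inner_add_left, hx, hy, add_zero]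
      | smul c x _ hx => rw [inner_smul_left, hx, mul_zero]
    have hden := dense_range_sa E hinj hsa
    have hpos : ∀ f : H, 0 ≤ (⟪E f, f⟫).re :=
      ((ContinuousLinearMap.nonneg_iff_isPositive E).1 hE0).2
    have hon : Orthonormal ℂ (fun n => E (ψ n)) := by
      rw [orthonormal_iff_ite]
      intro i j
      rw [hin, hψ, hbi']
      simp only [eq_comm]
    refine ⟨E, invPMap E hinj, fun n => E (ψ n), hsa, hpos, hinj, ?_, hden, invPMap_sa E hinj hsa,
      ?_, fun x => ⟨⟨x, rfl⟩, invPMap_left E hinj x _⟩, invPMap_right E hinj, ⟨hon, ?_⟩,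
      fun n => ⟨⟨ψ n, rfl⟩, hφ n⟩⟩
    · intro r hr
      refine ⟨spectrum_nonneg_of_nonneg hE0 hr, ?_⟩
      have hn : ‖E‖ ≤ Real.sqrt b := by
        refine ContinuousLinearMap.opNorm_le_bound _ (by positivity) fun f => ?_
        refine le_of_sq_le_sq ?_ (by positivity)
        rw [mul_pow, Real.sq_sqrt hb.le, hEn, hTn]
        exact (h f).2
      have h1 := spectrum.norm_le_norm_mul_of_mem hr
      have h2 : ‖(1 : H →L[ℂ] H)‖ ≤ 1 := ContinuousLinearMap.norm_id_le
      calc r ≤ ‖r‖ := Real.le_norm_self r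
        _ ≤ ‖E‖ * ‖(1 : H →L[ℂ] H)‖ := h1
        _ ≤ ‖E‖ * 1 := by gcongr
        _ ≤ _ := by rwa [mul_one]
    · intro y
      have := hpos (invPMap E hinj y)
      rw [invPMap_right, ← inner_conj_symm, Complex.conj_re] at this
      exact this
    · rw [Submodule.dense_iff_topologicalClosure_eq_top, Submodule.topologicalClosure_eq_top_iff,
        Submodule.eq_bot_iff]
      intro f hf
      rw [Submodule.mem_orthogonal] at hf
      have h0 : ∀ n, ⟪E (ψ n), f⟫ = 0 := fun n => hf _ (Submodule.subset_span ⟨n, rfl⟩)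
      have key : ∀ g, ‖E g‖ ≤ ‖f - E g‖ := fun g => by
        refine le_of_sq_le_sq ?_ (by positivity)
        rw [hEn, hTn]
        refine le_of_eq_of_le (tsum_congr fun n => ?_) (hon.tsum_inner_products_le (f - E g))
        rw [inner_sub_right, h0, hin, hψ, zero_sub, norm_neg, norm_inner_symm]
      have key2 : ∀ x : H, ‖x‖ ≤ ‖f - x‖ := fun x => by
        refine hden.induction (P := fun x => ‖x‖ ≤ ‖f - x‖) ?_
          (isClosed_le (by fun_prop) (by fun_prop)) x
        rintro _ ⟨g, rfl⟩
        exact key g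
      simpa using key2 f
  · rintro ⟨E, F, e, hsa, hpos, -, hspec, -, -, -, -, -, ⟨hon, -⟩, he⟩ f
    have hE0 : 0 ≤ E := (ContinuousLinearMap.nonneg_iff_isPositive E).2
      ⟨ContinuousLinearMap.isSelfAdjoint_iff_isSymmetric.mp hsa, hpos⟩
    have hn : ‖E‖ ≤ Real.sqrt b := by
      rw [CStarAlgebra.norm_le_iff_le_algebraMap E (Real.sqrt_nonneg b) hE0,
        le_algebraMap_iff_spectrum_le hsa]
      exact fun x hx => (hspec hx).2
    have heq : ∀ n, ‖⟪f, φ n⟫‖ ^ 2 = ‖⟪e n, E f⟫‖ ^ 2 := fun n => by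
      rw [(he n).2, ← inner_sa E hsa, norm_inner_symm]
    simp only [heq]
    refine ⟨hon.inner_products_summable _, (hon.tsum_inner_products_le _).trans ?_⟩
    have h1 : ‖E f‖ ≤ Real.sqrt b * ‖f‖ := E.le_of_opNorm_le hn f
    calc ‖E f‖ ^ 2 ≤ (Real.sqrt b * ‖f‖) ^ 2 := by gcongr
      _ = _ := by rw [mul_pow, Real.sq_sqrt hb.le]
end
end

section
/- Let {𝖾_n}_{n≥0} be an orthonormal basis of H and φ_n = n^{-β}𝖾_n + n^{-α}𝖾_0 (n ≥ 1) with β > 0 and α > 1/2 (and α - β ≤ 1/2). Then for any sequence f_m ∈ D(S̄) with ⟨S̄f_m, f_m⟩ → 0 and f_m → g in H, one has g = 0; hence {φ_n} is a generalized Riesz system. -/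
open scoped ComplexInnerProductSpace
open Filter Topology

noncomputable section

variable {H : Type*} [NormedAddCommGroup H] [InnerProductSpace ℂ H] [CompleteSpace H]

theorem gr_selfAdj_inverse (E : H →L[ℂ] H) (hE : IsSelfAdjoint E) (hinj : ∀ x, E x = 0 → x = 0) :
    ∃ F : H →ₗ.[ℂ] H, IsSelfAdjoint F ∧ F.domain = LinearMap.range E.toLinearMap ∧
      ∀ (y : F.domain), E (F y) = y := by
  have hsym : ∀ x y, ⟪E x, y⟫ = ⟪x, E y⟫ := fun x y => by
    have := ContinuousLinearMap.adjoint_inner_left E y x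
    rwa [← ContinuousLinearMap.star_eq_adjoint, hE.star_eq] at this
  have hker : LinearMap.ker (E.toLinearMap.toPMap ⊤).toFun = ⊥ := by
    rw [LinearMap.ker_eq_bot']
    rintro ⟨m, hm⟩ h
    have : E m = 0 := h
    exact Subtype.ext (hinj m this)
  set F := (E.toLinearMap.toPMap ⊤).inverse with hF
  have hd : ∀ y, y ∈ F.domain ↔ ∃ x, E x = y := by
    intro y
    rw [hF, LinearPMap.inverse_domain]
    constructor
    · rintro ⟨⟨x, hx⟩, h⟩
      exact ⟨x, h⟩
    · rintro ⟨x, h⟩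
      exact ⟨⟨x, trivial⟩, h⟩
  have hEF : ∀ y : F.domain, E (F y) = y := by
    intro y
    obtain ⟨x, hx⟩ := (hd y).1 y.2
    have : F y = x := LinearPMap.inverse_apply_eq hker (x := ⟨x, trivial⟩) hx
    rw [this, hx]
  have hdense : Dense (F.domain : Set H) := by
    rw [Submodule.dense_iff_topologicalClosure_eq_top, Submodule.topologicalClosure_eq_top_iff,
      Submodule.eq_bot_iff]
    intro y hy
    apply hinj
    apply ext_inner_left ℂ
    intro v
    rw [← hsym, inner_zero_right]
    exact hy _ ((hd _).2 ⟨v, rfl⟩)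
  refine ⟨F, ?_, ?_, hEF⟩
  · rw [LinearPMap.isSelfAdjoint_def]
    have hle : F ≤ F.adjoint := by
      apply LinearPMap.IsFormalAdjoint.le_adjoint hdense
      intro x y
      conv_lhs => rw [← hEF y]
      conv_rhs => rw [← hEF x]
      rw [hsym]
    refine le_antisymm ?_ hle |>.symm ▸ rfl
    refine LinearPMap.le_of_le_graph ?_
    intro p hp
    rw [LinearPMap.mem_graph_iff] at hp ⊢
    obtain ⟨y, hy1, hy2⟩ := hp
    have h1 : E (F.adjoint y) = y := by
      apply ext_inner_right ℂ
      intro v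
      have hv : E v ∈ F.domain := (hd _).2 ⟨v, rfl⟩
      have := LinearPMap.adjoint_isFormalAdjoint hdense y ⟨E v, hv⟩
      have h2 : F ⟨E v, hv⟩ = v := sub_eq_zero.1 (hinj _ (by rw [map_sub, hEF, sub_self]))
      rw [h2] at this
      rw [hsym, this]
    have hy : (y : H) ∈ F.domain := (hd _).2 ⟨_, h1⟩
    refine ⟨⟨y, hy⟩, hy1, ?_⟩
    rw [← hy2]
    exact sub_eq_zero.1 (hinj _ (by rw [map_sub, hEF, h1, sub_self]))
  · ext y
    rw [hd]; rfl

theorem gr_abstract (T : H →L[ℂ] H) (hker : ∀ y, T.adjoint y = 0 → y = 0) (ψ φ : ℕ → H)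
    (hB : ∀ n, T (T.adjoint (ψ n)) = φ n)
    (hbi : ∀ n m, ⟪ψ n, φ m⟫ = if n = m then 1 else 0)
    (hd : ∀ x, x ∈ closure (Set.range T.adjoint) → (∀ n, ⟪ψ n, T x⟫ = 0) → x = 0) :
    IsGRS φ := by
  set B : H →L[ℂ] H := T * star T with hBdef
  have hB0 : 0 ≤ B := mul_star_self_nonneg T
  set E : H →L[ℂ] H := CFC.sqrt B with hEdef
  have hE0 : 0 ≤ E := CFC.sqrt_nonneg B
  have hEE : E * E = B := CFC.sqrt_mul_sqrt_self B hB0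
  have hEsa : IsSelfAdjoint E := hE0.isSelfAdjoint
  have hEEx : ∀ x, E (E x) = T (T.adjoint x) := fun x => by
    have := congrArg (fun A : H →L[ℂ] H => A x) hEE
    exact this
  have hsym : ∀ (A : H →L[ℂ] H), IsSelfAdjoint A → ∀ x y, ⟪A x, y⟫ = ⟪x, A y⟫ := fun A hA x y => by
    have := ContinuousLinearMap.adjoint_inner_left A y x
    rwa [← ContinuousLinearMap.star_eq_adjoint, hA.star_eq] at this
  have hnorm : ∀ x, ‖E x‖ = ‖T.adjoint x‖ := fun x => by
    have h : ⟪E x, E x⟫ = ⟪T.adjoint x, T.adjoint x⟫ := by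
      rw [hsym E hEsa, hEEx, ContinuousLinearMap.adjoint_inner_left]
    rw [inner_self_eq_norm_sq_to_K, inner_self_eq_norm_sq_to_K] at h
    have h' : ‖E x‖ ^ 2 = ‖T.adjoint x‖ ^ 2 := by exact_mod_cast h
    exact (sq_eq_sq₀ (norm_nonneg _) (norm_nonneg _)).1 h'
  have hinj : ∀ x, E x = 0 → x = 0 := fun x hx => hker x (by
    rw [← norm_eq_zero, ← hnorm, hx, norm_zero])
  have hpos : ∀ x, x ≠ 0 → 0 < (⟪E x, x⟫).re := by
    intro x hx
    set R : H →L[ℂ] H := CFC.sqrt E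
    have hR : IsSelfAdjoint R := (CFC.sqrt_nonneg E).isSelfAdjoint
    have hRR : ∀ x, R (R x) = E x := fun x =>
      congrArg (fun A : H →L[ℂ] H => A x) (CFC.sqrt_mul_sqrt_self E hE0)
    rw [← hRR, hsym R hR, inner_self_eq_norm_sq_to_K]
    have hne : R x ≠ 0 := fun h => hx (hinj x (by rw [← hRR, h, map_zero]))
    have : 0 < ‖R x‖ ^ 2 := by positivity
    exact_mod_cast this
  obtain ⟨F, hFsa, hFd, hEF⟩ := gr_selfAdj_inverse E hEsa hinj
  have hmem : ∀ x, E x ∈ F.domain := fun x => by rw [hFd]; exact ⟨x, rfl⟩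
  have hFE : ∀ x, F ⟨E x, hmem x⟩ = x := fun x =>
    sub_eq_zero.1 (hinj _ (by rw [map_sub, hEF, sub_self]))
  refine ⟨E.toLinearMap.toPMap ⊤, F, fun n => E (ψ n), ?_, hFsa, ?_, ?_, ?_, ?_, ⟨?_, ?_⟩, ?_⟩
  · rw [LinearPMap.isSelfAdjoint_def]
    have := E.toPMap_adjoint_eq_adjoint_toPMap_of_dense (p := ⊤) (by simp)
    rwa [← ContinuousLinearMap.star_eq_adjoint, hEsa.star_eq] at this
  · intro x hx
    exact hpos x hx
  · intro y hy
    have h0 : F y ≠ 0 := fun h => hy (by rw [← hEF y, h, map_zero])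
    have := hpos _ h0
    rw [hsym E hEsa] at this
    rwa [hEF] at this
  · intro x
    exact ⟨hmem x, hFE x⟩
  · intro y
    exact ⟨trivial, hEF y⟩
  · rw [orthonormal_iff_ite]
    intro i j
    rw [hsym E hEsa, hEEx, hB, hbi]
  · rw [Submodule.dense_iff_topologicalClosure_eq_top, Submodule.topologicalClosure_eq_top_iff,
      Submodule.eq_bot_iff]
    intro y hy
    have hy' : ∀ n, ⟪ψ n, E y⟫ = 0 := fun n => by
      rw [← hsym E hEsa]
      exact hy _ (Submodule.subset_span ⟨n, rfl⟩)
    have hyc : y ∈ closure (F.domain : Set H) := hFsa.dense_domain y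
    obtain ⟨u, hu, hul⟩ := mem_closure_iff_seq_limit.1 hyc
    set z : ℕ → H := fun k => F ⟨u k, hu k⟩
    have hz : ∀ k, E (z k) = u k := fun k => hEF ⟨u k, hu k⟩
    have hcau : CauchySeq (fun k => T.adjoint (z k)) := by
      have := hul.cauchySeq
      rw [Metric.cauchySeq_iff] at this ⊢
      intro ε hε
      obtain ⟨N, hN⟩ := this ε hε
      refine ⟨N, fun m hm n hn => ?_⟩
      have := hN m hm n hn
      rw [dist_eq_norm, ← map_sub, ← hnorm, map_sub, hz, hz, ← dist_eq_norm]
      exact this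
    obtain ⟨x, hx⟩ := cauchySeq_tendsto_of_complete hcau
    have hTx : T x = E y := by
      have h1 := (T.continuous.tendsto x).comp hx
      have h2 := (E.continuous.tendsto y).comp hul
      refine tendsto_nhds_unique h1 (h2.congr fun k => ?_)
      simp only [Function.comp]
      rw [← hz, hEEx]
    have hx0 : x = 0 := hd x (mem_closure_of_tendsto hx (Eventually.of_forall fun k => ⟨_, rfl⟩))
      (fun n => by rw [hTx]; exact hy' n)
    have h3 : Tendsto (fun k => ‖u k‖) atTop (𝓝 ‖x‖) := by
      refine hx.norm.congr fun k => ?_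
      rw [← hnorm, hz]
    have := tendsto_nhds_unique h3 hul.norm
    rw [hx0, norm_zero] at this
    exact norm_eq_zero.1 this.symm
  · intro n
    refine ⟨trivial, hmem _, ?_⟩
    change φ n = E (E (ψ n))
    rw [hEEx, hB]

theorem gr_zero_rpow {a : ℝ} (ha : 0 < a) : (((0 : ℕ) : ℝ) ^ (-a) : ℝ) = 0 := by
  rw [Nat.cast_zero, Real.zero_rpow (by linarith)]

theorem gr_exists_basis (ee : ℕ → H) (hee : IsONB ee) : ∃ b : HilbertBasis ℕ ℂ H, ⇑b = ee :=
  ⟨HilbertBasis.mk hee.1 (by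
    rw [(Submodule.dense_iff_topologicalClosure_eq_top).1 hee.2]), HilbertBasis.coe_mk _ _⟩

theorem gr_exists_T (b : HilbertBasis ℕ ℂ H) (α β : ℝ) (hβ : 0 < β) (hα : 1 / 2 < α) :
    ∃ T : H →L[ℂ] H, ∀ n : ℕ, T (b n) = ((((n : ℝ) ^ (-β) : ℝ)) : ℂ) • b n
          + ((((n : ℝ) ^ (-α) : ℝ)) : ℂ) • b 0 := by
  have hbd : ∀ n : ℕ, ‖((((n : ℝ) ^ (-β) : ℝ)) : ℂ) • ContinuousLinearMap.id ℂ ℂ‖ ≤ 1 := by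
    intro n
    rw [norm_smul, ContinuousLinearMap.norm_id, mul_one, Complex.norm_real, Real.norm_eq_abs,
      abs_of_nonneg (by positivity)]
    rcases Nat.eq_zero_or_pos n with rfl | hn
    · rw [gr_zero_rpow hβ]; exact zero_le_one
    · exact Real.rpow_le_one_of_one_le_of_nonpos (by exact_mod_cast hn) (by linarith)
  let D0 : lp (fun _ : ℕ => ℂ) 2 →L[ℂ] lp (fun _ : ℕ => ℂ) 2 :=
    lp.mapCLM 2 (fun n : ℕ => ((((n : ℝ) ^ (-β) : ℝ)) : ℂ) • ContinuousLinearMap.id ℂ ℂ)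
      zero_le_one hbd
  let D : H →L[ℂ] H := (b.repr.symm.toContinuousLinearEquiv : _ →L[ℂ] H) ∘L D0 ∘L
    (b.repr.toContinuousLinearEquiv : H →L[ℂ] _)
  have hD : ∀ n, D (b n) = ((((n : ℝ) ^ (-β) : ℝ)) : ℂ) • b n := by
    intro n
    change b.repr.symm (D0 (b.repr (b n))) = _
    rw [LinearIsometryEquiv.symm_apply_eq, map_smul, b.repr_self]
    ext i
    change ((((i : ℝ) ^ (-β) : ℝ)) : ℂ) • (lp.single 2 n (1 : ℂ) : lp (fun _ : ℕ => ℂ) 2) i = 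
      ((((n : ℝ) ^ (-β) : ℝ)) : ℂ) • (lp.single 2 n (1 : ℂ) : lp (fun _ : ℕ => ℂ) 2) i
    by_cases h : i = n
    · subst h; rfl
    · have h0 : (lp.single 2 n (1 : ℂ) : lp (fun _ : ℕ => ℂ) 2) i = 0 :=
        lp.single_apply_ne (E := fun _ : ℕ => ℂ) 2 n (1 : ℂ) h
      exact (congrArg _ h0).trans ((smul_zero _).trans
        ((smul_zero _).symm.trans (congrArg _ h0.symm)))
  have hmem : Memℓp (fun n : ℕ => ((((n : ℝ) ^ (-α) : ℝ)) : ℂ)) 2 := by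
    refine memℓp_gen ?_
    have : Summable (fun n : ℕ => (n : ℝ) ^ (-(2 * α))) := by
      rw [Real.summable_nat_rpow]; linarith
    refine this.congr fun n => ?_
    rw [Complex.norm_real, Real.norm_eq_abs, abs_of_nonneg (by positivity)]
    rw [← Real.rpow_mul (by positivity)]
    congr 1
    simp
    ring
  let a : H := b.repr.symm ⟨_, hmem⟩
  have ha : ∀ n : ℕ, ⟪a, b n⟫ = ((((n : ℝ) ^ (-α) : ℝ)) : ℂ) := by
    intro n
    have h : ⟪b n, a⟫ = ((((n : ℝ) ^ (-α) : ℝ)) : ℂ) := by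
      rw [← b.repr_apply_apply, LinearIsometryEquiv.apply_symm_apply]
    rw [← inner_conj_symm, h, Complex.conj_ofReal]
  refine ⟨D + (innerSL ℂ a).smulRight (b 0), fun n => ?_⟩
  rw [ContinuousLinearMap.add_apply, hD, ContinuousLinearMap.smulRight_apply, innerSL_apply_apply, ha]

theorem gr_basis_ext (b : HilbertBasis ℕ ℂ H) (x : H) (h : ∀ n, ⟪b n, x⟫ = 0) : x = 0 := by
  have := b.hasSum_repr x
  simp only [b.repr_apply_apply, h, zero_smul] at this
  exact this.unique hasSum_zero

theorem gr_adj_psi (b : HilbertBasis ℕ ℂ H) (α β : ℝ) (T : H →L[ℂ] H)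
    (hT : ∀ n : ℕ, T (b n) = ((((n : ℝ) ^ (-β) : ℝ)) : ℂ) • b n
          + ((((n : ℝ) ^ (-α) : ℝ)) : ℂ) • b 0) (n : ℕ) (hn : 1 ≤ n) :
    T.adjoint (((((n : ℝ) ^ β : ℝ)) : ℂ) • b n) = b n := by
  rw [← sub_eq_zero]
  apply gr_basis_ext b
  intro m
  have ho := orthonormal_iff_ite.1 b.orthonormal
  rw [inner_sub_right, ContinuousLinearMap.adjoint_inner_right, hT]
  simp only [inner_add_left, inner_smul_left, inner_smul_right, ho, Complex.conj_ofReal]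
  rw [if_neg (show ¬ (0 = n) by omega)]
  by_cases h : m = n
  · subst h
    have h1 : ((m : ℝ) ^ β : ℝ) * ((m : ℝ) ^ (-β) : ℝ) = 1 := by
      rw [← Real.rpow_add (by exact_mod_cast hn)]; simp
    simp only [if_true, mul_one, mul_zero, add_zero]
    rw [← Complex.ofReal_mul, h1]; simp
  · simp [h]

theorem gr_adj_ker (b : HilbertBasis ℕ ℂ H) (α β : ℝ) (hβ : 0 < β) (hαβ : α - β ≤ 1 / 2)
    (T : H →L[ℂ] H)
    (hT : ∀ n : ℕ, T (b n) = ((((n : ℝ) ^ (-β) : ℝ)) : ℂ) • b n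
          + ((((n : ℝ) ^ (-α) : ℝ)) : ℂ) • b 0) (y : H) (hy : T.adjoint y = 0) : y = 0 := by
  have h1 : ∀ n : ℕ, 1 ≤ n → ⟪b n, y⟫ = -((((n : ℝ) ^ (β - α) : ℝ)) : ℂ) * ⟪b 0, y⟫ := by
    intro n hn
    have h := ContinuousLinearMap.adjoint_inner_right T (b n) y
    rw [hy, inner_zero_right, hT, inner_add_left, inner_smul_left, inner_smul_left,
      Complex.conj_ofReal, Complex.conj_ofReal] at h
    have hn0 : (0 : ℝ) < n := by exact_mod_cast hn
    have e1 : ((((n : ℝ) ^ β : ℝ)) : ℂ) * ((((n : ℝ) ^ (-β) : ℝ)) : ℂ) = 1 := by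
      rw [← Complex.ofReal_mul, ← Real.rpow_add hn0]; simp
    have e2 : ((((n : ℝ) ^ β : ℝ)) : ℂ) * ((((n : ℝ) ^ (-α) : ℝ)) : ℂ) =
        ((((n : ℝ) ^ (β - α) : ℝ)) : ℂ) := by
      rw [← Complex.ofReal_mul, ← Real.rpow_add hn0]; rfl
    linear_combination -((((n : ℝ) ^ β : ℝ)) : ℂ) * h - ⟪b n, y⟫ * e1 - ⟪b 0, y⟫ * e2
  have h0 : ⟪b 0, y⟫ = 0 := by
    by_contra hne
    have hs : Summable (fun n => ‖⟪b n, y⟫‖ ^ 2) := b.orthonormal.inner_products_summable y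
    have hs1 := (summable_nat_add_iff 1).2 hs
    have hs2 : Summable (fun n : ℕ => ((n + 1 : ℕ) : ℝ) ^ (2 * (β - α))) := by
      refine (hs1.mul_right ((‖⟪b 0, y⟫‖ ^ 2)⁻¹)).congr fun n => ?_
      have : ‖⟪b 0, y⟫‖ ≠ 0 := norm_ne_zero_iff.2 hne
      rw [h1 (n + 1) (by omega), norm_mul, norm_neg, Complex.norm_real, Real.norm_eq_abs,
        abs_of_nonneg (by positivity), mul_pow, mul_assoc, mul_inv_cancel₀ (by positivity),
        mul_one, ← Real.rpow_natCast, ← Real.rpow_mul (by positivity)]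
      congr 1
      push_cast
      ring
    have hs3 := (summable_nat_add_iff (f := fun n : ℕ => (n : ℝ) ^ (2 * (β - α))) 1).1 hs2
    rw [Real.summable_nat_rpow] at hs3
    linarith
  apply gr_basis_ext b
  intro n
  rcases Nat.eq_zero_or_pos n with rfl | hn
  · exact h0
  · rw [h1 n hn, h0, mul_zero]

theorem gr_closure_rel (S : H →ₗ.[ℂ] H) (hclos : S.IsClosable) (B : H →L[ℂ] H)
    (h : ∀ x : S.domain, B (S x) = x) (x : S.closure.domain) : B (S.closure x) = x := by
  have hx : ((x : H), S.closure x) ∈ S.closure.graph := S.closure.mem_graph x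
  rw [← hclos.graph_closure_eq_closure_graph] at hx
  have hcl : IsClosed {p : H × H | B p.2 = p.1} :=
    isClosed_eq (B.continuous.comp continuous_snd) continuous_fst
  have hsub : (S.graph : Set (H × H)) ⊆ {p : H × H | B p.2 = p.1} := by
    intro p hp
    obtain ⟨y, hy1, hy2⟩ := (LinearPMap.mem_graph_iff S).1 hp
    change B p.2 = p.1
    rw [← hy1, ← hy2, h]
  exact closure_minimal hsub hcl hx

/-- Let `φ_n = n^{-β} ee_n + n^{-α} ee_0` (`n ≥ 1`) with `β > 0`, `α > 1/2` and `α - β ≤ 1/2`,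
and let `S` be the operator `Sφ_n = n^{β} ee_n` on `span{φ_n}` with closure `S̄`.  Then for any
sequence `f_m ∈ D(S̄)` with `⟨S̄f_m, f_m⟩ → 0` and `f_m → g` one has `g = 0`; hence `{φ_n}` is a
generalized Riesz system. -/
theorem positively_closable_and_GRS
    (ee : ℕ → H) (hee : IsONB ee) (α β : ℝ) (hβ : 0 < β) (hα : 1 / 2 < α) (hαβ : α - β ≤ 1 / 2)
    (S : H →ₗ.[ℂ] H) (hclos : S.IsClosable)
    (hdom : S.domain = Submodule.span ℂ
      ((fun n : ℕ => ((((n : ℝ) ^ (-β) : ℝ)) : ℂ) • ee n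
          + ((((n : ℝ) ^ (-α) : ℝ)) : ℂ) • ee 0) '' {n : ℕ | 1 ≤ n}))
    (hS : ∀ n : ℕ, 1 ≤ n → ∃ h : ((((n : ℝ) ^ (-β) : ℝ)) : ℂ) • ee n
          + ((((n : ℝ) ^ (-α) : ℝ)) : ℂ) • ee 0 ∈ S.domain,
        S ⟨_, h⟩ = ((((n : ℝ) ^ β : ℝ)) : ℂ) • ee n) :
    (∀ (f : ℕ → S.closure.domain) (g : H),
      Tendsto (fun m => (⟪S.closure (f m), ((f m) : H)⟫).re) atTop (𝓝 0) →
      Tendsto (fun m => ((f m) : H)) atTop (𝓝 g) → g = 0) ∧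
    IsGRS (fun n : ℕ => ((((n + 1 : ℕ) : ℝ) ^ (-β) : ℝ) : ℂ) • ee (n + 1)
        + ((((n + 1 : ℕ) : ℝ) ^ (-α) : ℝ) : ℂ) • ee 0) := by
  obtain ⟨b, rfl⟩ := gr_exists_basis ee hee
  obtain ⟨T, hT⟩ := gr_exists_T b α β hβ hα
  have hψ := gr_adj_psi b α β T hT
  constructor
  · have hrel0 : ∀ x : S.domain, (T ∘L T.adjoint) (S x) = x := by
      have key : ∀ x (hx : x ∈ S.domain), ∀ h' : x ∈ S.domain, (T ∘L T.adjoint) (S ⟨x, h'⟩) = x := by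
        intro x hx
        rw [hdom] at hx
        induction hx using Submodule.span_induction with
        | mem x hx =>
          obtain ⟨n, hn, rfl⟩ := hx
          intro h'
          obtain ⟨h, hh⟩ := hS n hn
          change T (T.adjoint (S ⟨_, h⟩)) = _
          rw [hh, hψ n hn, hT]
        | zero =>
          intro h'
          have : S ⟨0, h'⟩ = 0 := S.map_zero
          rw [this, map_zero]
        | add x y hx hy ihx ihy =>
          intro h'
          rw [← hdom] at hx hy
          have : S ⟨x + y, h'⟩ = S ⟨x, hx⟩ + S ⟨y, hy⟩ := S.map_add ⟨x, hx⟩ ⟨y, hy⟩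
          rw [this, map_add, ihx, ihy]
        | smul c x hx ihx =>
          intro h'
          rw [← hdom] at hx
          have : S ⟨c • x, h'⟩ = c • S ⟨x, hx⟩ := S.map_smul c ⟨x, hx⟩
          rw [this, map_smul, ihx]
      exact fun x => key x x.2 x.2
    have hrel := gr_closure_rel S hclos _ hrel0
    intro f g hf hg
    have e : ∀ m, (⟪S.closure (f m), ((f m) : H)⟫).re = ‖T.adjoint (S.closure (f m))‖ ^ 2 := by
      intro m
      conv_lhs => rw [← hrel (f m)]
      rw [ContinuousLinearMap.comp_apply, ← ContinuousLinearMap.adjoint_inner_left,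
        inner_self_eq_norm_sq_to_K]
      norm_cast
    simp only [e] at hf
    have h2 : Tendsto (fun m => T.adjoint (S.closure (f m))) atTop (𝓝 0) := by
      rw [tendsto_zero_iff_norm_tendsto_zero]
      have := hf.sqrt
      simpa [Real.sqrt_sq] using this
    have h3 := (T.continuous.tendsto 0).comp h2
    rw [map_zero] at h3
    refine tendsto_nhds_unique hg (h3.congr fun m => ?_)
    exact hrel (f m)
  · have ho := orthonormal_iff_ite.1 b.orthonormal
    refine gr_abstract T (gr_adj_ker b α β hβ hαβ T hT)
      (fun n : ℕ => (((((n + 1 : ℕ) : ℝ) ^ β : ℝ)) : ℂ) • b (n + 1)) _ ?_ ?_ ?_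
    · intro n
      rw [hψ (n + 1) (by omega), hT]
    · intro n m
      rw [← hT (m + 1), ← ContinuousLinearMap.adjoint_inner_left, hψ (n + 1) (by omega), ho]
      simp
    · intro x hx h
      apply gr_basis_ext b
      intro n
      rcases n with _ | n
      · have hcl : IsClosed {z : H | ⟪b 0, z⟫ = 0} :=
          isClosed_eq (by fun_prop) continuous_const
        refine closure_minimal ?_ hcl hx
        rintro _ ⟨w, rfl⟩
        change ⟪b 0, T.adjoint w⟫ = 0
        rw [ContinuousLinearMap.adjoint_inner_right, hT, gr_zero_rpow hβ,
          gr_zero_rpow (by linarith : 0 < α)]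
        simp
      · have := h n
        rwa [← ContinuousLinearMap.adjoint_inner_left, hψ (n + 1) (by omega)] at this
end
end
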